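/- Let f : X × X → ℂ (with f(a−b, b) interpreted via the group difference a−b in X) and let g : X → ℂ. Then for every d ∈ X: Σ_{a∈X} ε₀·exp(−2πi⟨a,d⟩)·( Σ_{b∈X} ε₀·f(a−b, b)·g(b) ) = (Φ_d ∗ (Fg))(d), where Φ_d : X → ℂ is defined by Φ_d(r) = Σ_{b∈X} ε₀·exp(−2πi⟨r,b⟩)·( Σ_{c∈X} ε₀·exp(−2πi⟨c,d⟩)·f(c, b) ). -/

import Mathlib

open Complex Finset

noncomputable section

/-- Balanced representative of `z : ZMod n` in `[-n/2, n/2)`. -/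
def bval (n : ℕ) (z : ZMod n) : ℤ :=
  if 2 * (z.val : ℤ) < (n : ℤ) then (z.val : ℤ) else (z.val : ℤ) - (n : ℤ)

/-- The real point `ε′·z′ ∈ [-H·H'/2, H·H'/2)` of `L′` corresponding to
`v : ZMod (H·H'^2)`; the group structure of `ZMod (H·H'^2)` realizes pointwise
addition followed by reduction modulo `H·H'` back into `L′`. -/
def Lp2 (H H' : ℕ) (v : ZMod (H * H' ^ 2)) : ℝ := (bval (H * H' ^ 2) v : ℝ) / H'

/-- `X` is the finite abelian group of all functions from `L` (`H²` points) to `L′`. -/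
abbrev X2 (H H' : ℕ) := ZMod (H ^ 2) → ZMod (H * H' ^ 2)

/-- `⟨a,b⟩ = ε·Σ_{k∈L} a(k)·b(k)` with `ε = 1/H`. -/
def ip2 (H H' : ℕ) [NeZero H] (a b : X2 H H') : ℝ :=
  (1 / H) * ∑ k : ZMod (H ^ 2), Lp2 H H' (a k) * Lp2 H H' (b k)

/-- `ε₀ = H^(−H²/2)·H′^(−H²)` (`H` is even, so `H²/2` is exact). -/
def eps02 (H H' : ℕ) : ℝ := ((H : ℝ) ^ (H ^ 2 / 2))⁻¹ * ((H' : ℝ) ^ (H ^ 2))⁻¹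

/-- `(Ff)(b) = Σ_{a∈X} ε₀·exp(−2πi⟨a,b⟩)·f(a)`. -/
def Ftr2 (H H' : ℕ) [NeZero H] [NeZero H'] (f : X2 H H' → ℂ) (b : X2 H H') : ℂ :=
  ∑ a : X2 H H',
    (eps02 H H' : ℂ) * Complex.exp (-2 * (Real.pi : ℂ) * I * (ip2 H H' a b : ℂ)) * f a

/-- `(f∗g)(a) = Σ_{a′∈X} ε₀·f(a−a′)·g(a′)`. -/
def conv2 (H H' : ℕ) [NeZero H] [NeZero H'] (f g : X2 H H' → ℂ) (a : X2 H H') : ℂ :=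
  ∑ a' : X2 H H', (eps02 H H' : ℂ) * f (a - a') * g a'

/-!
Substituting `c = a - b` in the left-hand side and using additivity of the kernel in its first
argument turns it into the Fourier transform, evaluated at `d`, of the product of
`b ↦ (F f(·, b))(d)` and `g`. The Fourier transform of a product is the convolution of the Fourier
transforms: distinct characters convolve to zero, and a character convolved with itself is itself
times the order of the group, a factor which the normalization `ε₀² |X| = 1` cancels.
-/

section ScaledFourier

variable {G Γ R : Type*} [Fintype G] [AddCommGroup Γ] [CommSemiring R]

/-- The Fourier transform, with weight `e` on each point, of a function on a finite set `G` whose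
points index characters of `Γ`. With `e = ε₀` it stands for `F`. No conjugation or sign is built in:
these belong to the choice of `χ`. -/
def scaledFourier (e : R) (χ : G → AddChar Γ R) (u : G → R) (y : Γ) : R :=
  ∑ x, e * χ x y * u x

/-- The convolution on the finite group `Γ` in which each point has weight `e`. With `e = ε₀` it
stands for `∗`. -/
def scaledConv [Fintype Γ] (e : R) (u v : Γ → R) (y : Γ) : R :=
  ∑ z, e * u (y - z) * v z

theorem sum_addChar_sub_mul_addChar [Fintype Γ] [IsDomain R] [DecidableEq (AddChar Γ R)]
    (ψ φ : AddChar Γ R) (y : Γ) :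
    ∑ z, ψ (y - z) * φ z = if ψ = φ then ψ y * Fintype.card Γ else 0 := by
  have split_sub (z : Γ) : ψ (y - z) * φ z = ψ y * (φ - ψ) z := by
    rw [sub_eq_add_neg, AddChar.map_add_eq_mul, AddChar.sub_apply]
    ring
  simp only [split_sub, ← mul_sum, AddChar.sum_eq_ite, sub_eq_zero, eq_comm (a := φ), mul_ite,
    mul_zero]

theorem scaledFourier_mul [Fintype Γ] [IsDomain R] {χ : G → AddChar Γ R}
    (hχ : Function.Injective χ) {e : R} (he : e ^ 2 * Fintype.card Γ = 1) (u v : G → R) (y : Γ) :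
    scaledFourier e χ (fun x => u x * v x) y =
      scaledConv e (scaledFourier e χ u) (scaledFourier e χ v) y := by
  classical
  symm
  calc ∑ z, e * (∑ x, e * χ x (y - z) * u x) * ∑ x', e * χ x' z * v x'
      = ∑ z, ∑ x, ∑ x', e ^ 3 * u x * v x' * (χ x (y - z) * χ x' z) := by
        refine sum_congr rfl fun z _ => ?_
        rw [mul_assoc, sum_mul_sum, mul_sum]
        refine sum_congr rfl fun x _ => ?_
        rw [mul_sum]
        exact sum_congr rfl fun x' _ => by ring
    _ = ∑ x, ∑ x', e ^ 3 * u x * v x' * ∑ z, χ x (y - z) * χ x' z := by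
        simp only [mul_sum]
        rw [sum_comm]
        exact sum_congr rfl fun x _ => sum_comm
    _ = ∑ x, e ^ 3 * u x * v x * (χ x y * Fintype.card Γ) := by
        simp only [sum_addChar_sub_mul_addChar, hχ.eq_iff, mul_ite, mul_zero, sum_ite_eq, mem_univ,
          if_true]
    _ = ∑ x, e ^ 2 * Fintype.card Γ * (e * χ x y * (u x * v x)) :=
        sum_congr rfl fun x _ => by ring
    _ = ∑ x, e * χ x y * (u x * v x) := by simp only [he, one_mul]

theorem scaledFourier_sum_sub [AddCommGroup G] (χ : G →+ AddChar Γ R) (e : R) (f : G → G → R)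
    (g : G → R) (y : Γ) :
    scaledFourier e χ (fun a => ∑ b, e * f (a - b) b * g b) y =
      scaledFourier e χ (fun b => scaledFourier e χ (f · b) y * g b) y := by
  calc ∑ a, e * χ a y * ∑ b, e * f (a - b) b * g b
      = ∑ b, ∑ a, e * χ a y * (e * f (a - b) b * g b) := by
        simp only [mul_sum]
        exact sum_comm
    _ = ∑ b, ∑ c, e * χ (c + b) y * (e * f c b * g b) := by
        refine sum_congr rfl fun b _ => ?_
        rw [← Equiv.sum_comp (Equiv.addRight b)]
        simp only [Equiv.coe_addRight, add_sub_cancel_right]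
    _ = ∑ b, e * χ b y * ((∑ c, e * χ c y * f c b) * g b) := by
        refine sum_congr rfl fun b _ => ?_
        rw [sum_mul, mul_sum]
        refine sum_congr rfl fun c _ => ?_
        rw [map_add, AddChar.add_apply]
        ring

theorem stmt13_general [AddCommGroup G] [Fintype Γ] [IsDomain R] (χ : G →+ AddChar Γ R)
    (hχ : Function.Injective χ) {e : R} (he : e ^ 2 * Fintype.card Γ = 1) (f : G → G → R)
    (g : G → R) (d : Γ) :
    scaledFourier e χ (fun a => ∑ b, e * f (a - b) b * g b) d =
      scaledConv e (scaledFourier e χ fun b => scaledFourier e χ (f · b) d)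
        (scaledFourier e χ g) d := by
  rw [scaledFourier_sum_sub, scaledFourier_mul hχ he]

end ScaledFourier

section DotProductChar

variable {ι S M : Type*} [Fintype ι] [CommRing S] [CommMonoid M]

/-- The bicharacter `(a, b) ↦ ψ (a ⬝ᵥ b)` of `ι → S`, curried so that each `a` gives a character.
With `ψ` the inverse of the standard character of `ZMod (H * H' ^ 2)` it is the Fourier kernel
`exp(−2πi⟨a,b⟩)` of `X`. -/
def dotProductChar (ψ : AddChar S M) : (ι → S) →+ AddChar (ι → S) M where
  toFun a :=
    { toFun := fun b => ψ (a ⬝ᵥ b)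
      map_zero_eq_one' := by rw [dotProduct_zero, AddChar.map_zero_eq_one]
      map_add_eq_mul' := fun b c => by rw [dotProduct_add, AddChar.map_add_eq_mul] }
  map_zero' := by
    ext b
    simp only [AddChar.coe_mk, zero_dotProduct, AddChar.map_zero_eq_one, AddChar.zero_apply]
  map_add' a a' := by
    ext b
    simp only [AddChar.coe_mk, add_dotProduct, AddChar.map_add_eq_mul, AddChar.add_apply]

theorem dotProductChar_apply (ψ : AddChar S M) (a b : ι → S) :
    dotProductChar ψ a b = ψ (a ⬝ᵥ b) :=
  rfl

theorem dotProductChar_injective {ψ : AddChar S M} (hψ : ψ.IsPrimitive) :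
    Function.Injective (dotProductChar ψ : (ι → S) →+ AddChar (ι → S) M) := by
  classical
  refine (injective_iff_map_eq_zero _).mpr fun a ha => funext fun k => ?_
  by_contra hak
  refine hψ hak (AddChar.eq_one_iff.mpr fun s => ?_)
  rw [AddChar.mulShift_apply, ← dotProduct_single, ← dotProductChar_apply, ha, AddChar.zero_apply]

theorem isPrimitive_inv {ψ : AddChar S M} (hψ : ψ.IsPrimitive) : ψ⁻¹.IsPrimitive := by
  intro s hs
  rw [AddChar.inv_mulShift, AddChar.mulShift_mulShift, neg_one_mul]
  exact hψ (neg_ne_zero.mpr hs)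

end DotProductChar

theorem intCast_bval (n : ℕ) [NeZero n] (z : ZMod n) : ((bval n z : ℤ) : ZMod n) = z := by
  unfold bval
  split_ifs <;> simp

section Kernel

variable (H H' : ℕ) [NeZero H] [NeZero H']

theorem ip2_eq_sum_bval_div (a b : X2 H H') :
    ip2 H H' a b = (∑ k, bval _ (a k) * bval _ (b k) : ℤ) / (H * H' ^ 2 : ℕ) := by
  have hH' : (H' : ℝ) ≠ 0 := Nat.cast_ne_zero.mpr (NeZero.ne H')
  unfold ip2 Lp2
  push_cast
  rw [mul_sum, sum_div]
  exact sum_congr rfl fun k _ => by field_simp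

theorem exp_ip2_eq_dotProductChar (a b : X2 H H') :
    exp (-2 * (Real.pi : ℂ) * I * (ip2 H H' a b : ℂ)) =
      dotProductChar (ZMod.stdAddChar (N := H * H' ^ 2))⁻¹ a b := by
  have hdot : a ⬝ᵥ b = ((∑ k, bval _ (a k) * bval _ (b k) : ℤ) : ZMod (H * H' ^ 2)) := by
    push_cast
    simp only [intCast_bval, dotProduct]
  rw [dotProductChar_apply, AddChar.inv_apply, hdot, ← Int.cast_neg, ZMod.stdAddChar_coe,
    ip2_eq_sum_bval_div]
  congr 1
  push_cast
  ring

theorem eps02_sq_mul_card (hH : Even H) :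
    (eps02 H H' : ℂ) ^ 2 * Fintype.card (X2 H H') = 1 := by
  have hH0 : (H : ℂ) ≠ 0 := Nat.cast_ne_zero.mpr (NeZero.ne H)
  have hH'0 : (H' : ℂ) ≠ 0 := Nat.cast_ne_zero.mpr (NeZero.ne H')
  have half_mul_two : H ^ 2 / 2 * 2 = H ^ 2 :=
    Nat.div_two_mul_two_of_even (hH.pow_of_ne_zero two_ne_zero)
  have sq_eps : (eps02 H H' : ℂ) ^ 2 = ((H * H' ^ 2 : ℂ) ^ H ^ 2)⁻¹ := by
    unfold eps02
    push_cast
    rw [mul_pow, inv_pow, inv_pow, ← pow_mul, half_mul_two, ← mul_inv, mul_pow, pow_right_comm]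
  rw [sq_eps, Fintype.card_fun, ZMod.card, ZMod.card]
  push_cast
  exact inv_mul_cancel₀ (by positivity)

end Kernel

/-- for `f : X × X → ℂ` and `g : X → ℂ`, the Fourier transform in `a` of
`Σ_b ε₀·f(a−b,b)·g(b)` at `d` equals `(Φ_d ∗ (Fg))(d)`, where
`Φ_d(r) = Σ_b ε₀·exp(−2πi⟨r,b⟩)·(Σ_c ε₀·exp(−2πi⟨c,d⟩)·f(c,b))`. -/
theorem stmt13 (H H' : ℕ) [NeZero H] [NeZero H'] (hH : Even H) (hH' : Even H')
    (f : X2 H H' → X2 H H' → ℂ) (g : X2 H H' → ℂ) (d : X2 H H') :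
    (∑ a : X2 H H',
        (eps02 H H' : ℂ) * Complex.exp (-2 * (Real.pi : ℂ) * I * (ip2 H H' a d : ℂ)) *
          (∑ b : X2 H H', (eps02 H H' : ℂ) * f (a - b) b * g b)) =
      conv2 H H'
        (fun r => ∑ b : X2 H H',
          (eps02 H H' : ℂ) * Complex.exp (-2 * (Real.pi : ℂ) * I * (ip2 H H' r b : ℂ)) *
            (∑ c : X2 H H',
              (eps02 H H' : ℂ) * Complex.exp (-2 * (Real.pi : ℂ) * I * (ip2 H H' c d : ℂ)) *
                f c b))
        (Ftr2 H H' g) d := by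
  -- `Φ_d` pairs `r` with `b` in the order opposite to `scaledFourier`, hence `dotProduct_comm`.
  simpa only [conv2, Ftr2, scaledConv, scaledFourier, exp_ip2_eq_dotProductChar,
    dotProductChar_apply, dotProduct_comm] using
    stmt13_general _ (dotProductChar_injective (isPrimitive_inv (ZMod.isPrimitive_stdAddChar _)))
      (eps02_sq_mul_card H H' hH) f g d
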